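/- arXiv:2503.13785 — 2 statements merged into one kernel-verified Lean document; each statement's English description precedes it below -/
import Mathlib

section
/- For an n×n matrix A over a field k, the determinant of the induced linear map on the d-th symmetric power Sym^d(k^n) equals det(A)^m, where m = binomial(n+d-1, n). -/
open MvPolynomial

/-! For a diagonal matrix `diag(a)` the monomial `X ^ s` is an eigenvector with eigenvalue `a ^ s`,
so the determinant is the product over `l` of `a l` to the total exponent of `X l` in all monomials
of degree `d`; by symmetry this exponent does not depend on `l`, and double counting evaluates it.
A transvection replaces `X i` by `X i + c X j`, hence acts unitriangularly with respect to the
exponent of `X i`. Over a field every matrix is a product of diagonal matrices and transvections,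
and both sides are multiplicative. Both sides are moreover polynomials in the entries with integer
coefficients, so over a commutative ring it suffices to treat the generic matrix, over the fraction
field of `ℤ[X i j]`. -/

section Exponents

variable {σ : Type*} [Fintype σ] [DecidableEq σ]

lemma sum_finsuppAntidiag_apply_eq (d : ℕ) (i j : σ) :
    ∑ s ∈ Finset.univ.finsuppAntidiag d, s i = ∑ s ∈ Finset.univ.finsuppAntidiag d, s j := by
  refine Finset.sum_equiv (Finsupp.domCongr (Equiv.swap i j)).toEquiv (fun s => ?_) (by simp)
  simp only [Finset.mem_finsuppAntidiag, Finset.subset_univ, and_true]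
  have degree_swap : ∑ l, (Finsupp.domCongr (Equiv.swap i j)).toEquiv s l = ∑ l, s l := by
    simpa using Equiv.sum_comp (Equiv.swap i j) s
  rw [degree_swap]

lemma card_mul_sum_finsuppAntidiag_apply (d : ℕ) (i : σ) :
    Fintype.card σ * ∑ s ∈ Finset.univ.finsuppAntidiag d, s i
      = d * (Fintype.card σ + d - 1).choose d :=
  calc Fintype.card σ * ∑ s ∈ Finset.univ.finsuppAntidiag d, s i
      = ∑ j, ∑ s ∈ Finset.univ.finsuppAntidiag d, s j := by
        simp only [sum_finsuppAntidiag_apply_eq d _ i, Finset.sum_const, Finset.card_univ,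
          smul_eq_mul]
    _ = ∑ s ∈ Finset.univ.finsuppAntidiag d, ∑ j : σ, s j := Finset.sum_comm
    _ = ∑ _s ∈ (Finset.univ : Finset σ).finsuppAntidiag d, d :=
        Finset.sum_congr rfl fun s hs => (Finset.mem_finsuppAntidiag.1 hs).1
    _ = d * (Fintype.card σ + d - 1).choose d := by
        rw [Finset.sum_const, Finset.card_finsuppAntidiag_nat_eq_choose, Finset.card_univ,
          smul_eq_mul, mul_comm]

lemma mul_choose_add_sub_one (n d : ℕ) :
    n * (n + d - 1).choose n = d * (n + d - 1).choose d := by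
  cases d with
  | zero => cases n <;> simp
  | succ e =>
    rw [Nat.add_succ_sub_one, Nat.choose_symm_add, mul_comm (e + 1), Nat.choose_succ_right_eq,
      Nat.add_sub_cancel, mul_comm]

lemma sum_finsuppAntidiag_apply (d : ℕ) (i : σ) :
    ∑ s ∈ Finset.univ.finsuppAntidiag d, s i
      = (Fintype.card σ + d - 1).choose (Fintype.card σ) := by
  have card_pos : 0 < Fintype.card σ := Fintype.card_pos_iff.2 ⟨i⟩
  apply Nat.eq_of_mul_eq_mul_left card_pos
  rw [card_mul_sum_finsuppAntidiag_apply, mul_choose_add_sub_one]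

end Exponents

lemma det_eq_one_of_blockUnitriangular {m R α : Type*} [CommRing R] [Fintype m]
    [DecidableEq m] [LinearOrder α] {M : Matrix m m R} (b : m → α)
    (hM : ∀ i j, b j ≤ b i → M i j = (1 : Matrix m m R) i j) : M.det = 1 := by
  have triangular : M.BlockTriangular b := fun i j hij => by
    rw [hM i j hij.le, Matrix.one_apply_ne (by rintro rfl; exact lt_irrefl _ hij)]
  rw [triangular.det]
  refine Finset.prod_eq_one fun a _ => ?_
  have block_eq_one : M.toSquareBlock b a = 1 := by
    ext i j
    rw [Matrix.toSquareBlock_def, Matrix.of_apply, hM i j (j.2.trans i.2.symm).le]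
    simp only [Matrix.one_apply, Subtype.ext_iff]
  rw [block_eq_one, Matrix.det_one]

section HomogeneousBasis

variable {σ R : Type*} [CommSemiring R] [Fintype σ] [DecidableEq σ]

variable (σ R) in
/-- The monomials of degree `d`, as a basis of the space of forms of degree `d`. -/
noncomputable def homogeneousBasis (d : ℕ) :
    Module.Basis ((Finset.univ : Finset σ).finsuppAntidiag d) R (homogeneousSubmodule σ R d) :=
  (basisRestrictSupport R _).map <| LinearEquiv.ofEq _ _ <| by
    rw [homogeneousSubmodule_eq_finsupp_supported, restrictSupport]
    congr 1
    ext s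
    simp [Finsupp.degree_eq_sum]

lemma coe_homogeneousBasis (d : ℕ) (s : (Finset.univ : Finset σ).finsuppAntidiag d) :
    (homogeneousBasis σ R d s : MvPolynomial σ R) = monomial s.1 1 :=
  congrArg AddMonoidAlgebra.ofCoeff (Finsupp.supportedEquivFinsupp_symm_single (R := R) _ s 1)

end HomogeneousBasis

section SymPower

variable {R S σ τ υ : Type*} [CommSemiring R] [CommSemiring S] [Fintype τ] [Fintype υ]

lemma toMvPolynomial_eq_sum_smul_X (A : Matrix σ τ R) (i : σ) :
    A.toMvPolynomial i = ∑ j, A i j • X j := by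
  simp only [Matrix.toMvPolynomial, smul_eq_C_mul, C_mul_X_eq_monomial]

/-- The linear map induced by a matrix on `d`-th symmetric powers, realized as spaces of forms of
degree `d`. Since `X i` goes to the `i`-th row of `A`, matrices act on row vectors, and products
are reversed. -/
noncomputable def symPower (d : ℕ) (A : Matrix σ τ R) :
    homogeneousSubmodule σ R d →ₗ[R] homogeneousSubmodule τ R d :=
  (bind₁ A.toMvPolynomial).toLinearMap.restrict fun p hp => by
    rw [← one_mul d]
    exact IsHomogeneous.aeval hp _ A.toMvPolynomial_isHomogeneous

lemma symPower_mul (d : ℕ) (A : Matrix σ τ R) (B : Matrix τ υ R) :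
    symPower d (A * B) = symPower d B ∘ₗ symPower d A := by
  ext p : 2
  change bind₁ (A * B).toMvPolynomial p.1 = bind₁ B.toMvPolynomial (bind₁ A.toMvPolynomial p.1)
  rw [bind₁_bind₁]
  simp only [← Matrix.toMvPolynomial_mul]

variable [Fintype σ] [DecidableEq σ] [DecidableEq τ]

lemma toMatrix_symPower_apply (d : ℕ) (A : Matrix σ τ R)
    (t : (Finset.univ : Finset τ).finsuppAntidiag d)
    (s : (Finset.univ : Finset σ).finsuppAntidiag d) :
    LinearMap.toMatrix (homogeneousBasis σ R d) (homogeneousBasis τ R d) (symPower d A) t s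
      = coeff t.1 (bind₁ A.toMvPolynomial (monomial s.1 1)) := by
  rw [LinearMap.toMatrix_apply, ← coe_homogeneousBasis]
  rfl

lemma toMatrix_symPower_map (f : R →+* S) (d : ℕ) (A : Matrix σ τ R) :
    LinearMap.toMatrix (homogeneousBasis σ S d) (homogeneousBasis τ S d) (symPower d (A.map f))
      = (LinearMap.toMatrix (homogeneousBasis σ R d) (homogeneousBasis τ R d)
          (symPower d A)).map f := by
  ext t s
  rw [Matrix.map_apply, toMatrix_symPower_apply, toMatrix_symPower_apply, ← coeff_map, map_bind₁,
    map_monomial, f.map_one, funext (Matrix.toMvPolynomial_map f A)]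

lemma bind₁_toMvPolynomial_diagonal_monomial (a : σ → R) (s : σ →₀ ℕ) :
    bind₁ (Matrix.diagonal a).toMvPolynomial (monomial s 1) = monomial s (∏ l, a l ^ s l) := by
  have row (l : σ) : (Matrix.diagonal a).toMvPolynomial l = C (a l) * X l := by
    simp [toMvPolynomial_eq_sum_smul_X, Matrix.diagonal_apply, smul_eq_C_mul]
  have support_prod : ∏ l ∈ s.support, a l ^ s l = ∏ l, a l ^ s l :=
    Finsupp.prod_fintype s _ fun l => pow_zero (a l)
  simp only [bind₁_monomial, row, mul_pow, Finset.prod_mul_distrib, ← C_pow, ← map_prod,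
    support_prod, C_1, one_mul]
  rw [prod_X_pow_eq_monomial, C_mul_monomial, mul_one]

lemma toMatrix_symPower_diagonal (d : ℕ) (a : σ → R) :
    LinearMap.toMatrix (homogeneousBasis σ R d) (homogeneousBasis σ R d)
        (symPower d (Matrix.diagonal a))
      = Matrix.diagonal fun s => ∏ l, a l ^ s.1 l := by
  ext t s
  rw [toMatrix_symPower_apply, bind₁_toMvPolynomial_diagonal_monomial, coeff_monomial,
    Matrix.diagonal_apply]
  rcases eq_or_ne t s with rfl | hts
  · simp
  · rw [if_neg fun h => hts (Subtype.ext h.symm), if_neg hts]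

end SymPower

section Det

variable {R S σ : Type*} [CommRing R] [CommRing S] [Fintype σ]

lemma det_symPower_map (f : R →+* S) (d : ℕ) (A : Matrix σ σ R) :
    LinearMap.det (symPower d (A.map f)) = f (LinearMap.det (symPower d A)) := by
  classical
  rw [← LinearMap.det_toMatrix (homogeneousBasis σ S d), toMatrix_symPower_map,
    ← LinearMap.det_toMatrix (homogeneousBasis σ R d), RingHom.map_det, RingHom.mapMatrix_apply]

variable [DecidableEq σ]

lemma bind₁_toMvPolynomial_transvection_monomial (i j : σ) (c : R) (s : σ →₀ ℕ) :
    bind₁ (Matrix.transvection i j c).toMvPolynomial (monomial s 1)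
      = ∑ m ∈ Finset.range (s i + 1),
          monomial (s.erase i + .single i m + .single j (s i - m))
            ((s i).choose m * c ^ (s i - m)) := by
  have row_self : (Matrix.transvection i j c).toMvPolynomial i = X i + C c * X j := by
    rw [Matrix.transvection, Matrix.toMvPolynomial_add, Matrix.toMvPolynomial_one, Pi.add_apply,
      toMvPolynomial_eq_sum_smul_X]
    simp [Matrix.single_apply, smul_eq_C_mul]
  have row_of_ne {l : σ} (hl : l ≠ i) : (Matrix.transvection i j c).toMvPolynomial l = X l := by
    rw [Matrix.transvection, Matrix.toMvPolynomial_add, Matrix.toMvPolynomial_one, Pi.add_apply,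
      toMvPolynomial_eq_sum_smul_X]
    simp [hl.symm]
  have image_erase : bind₁ (Matrix.transvection i j c).toMvPolynomial (monomial (s.erase i) 1)
      = monomial (s.erase i) 1 := by
    rw [bind₁_monomial, C_1, one_mul, ← prod_X_pow_eq_monomial]
    refine Finset.prod_congr rfl fun l hl => ?_
    rw [Finsupp.support_erase] at hl
    rw [row_of_ne (Finset.ne_of_mem_erase hl)]
  calc bind₁ (Matrix.transvection i j c).toMvPolynomial (monomial s 1)
      = bind₁ (Matrix.transvection i j c).toMvPolynomial
          (monomial (s.erase i) 1 * X i ^ s i) := by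
        rw [X_pow_eq_monomial, monomial_mul, Finsupp.erase_add_single, one_mul]
    _ = monomial (s.erase i) 1 * (X i + C c * X j) ^ s i := by
        rw [map_mul, image_erase, map_pow, bind₁_X_right, row_self]
    _ = _ := by
        rw [add_pow, Finset.mul_sum]
        refine Finset.sum_congr rfl fun m _ => ?_
        rw [mul_pow, X_pow_eq_monomial, X_pow_eq_monomial, ← C_pow, C_mul_monomial, monomial_mul,
          ← C_eq_coe_nat, mul_comm _ (C _), C_mul_monomial, monomial_mul, add_assoc]
        simp only [one_mul, mul_one]

lemma coeff_bind₁_toMvPolynomial_transvection_monomial {i j : σ} (hij : i ≠ j) (c : R)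
    {s t : σ →₀ ℕ} (hst : s i ≤ t i) :
    coeff t (bind₁ (Matrix.transvection i j c).toMvPolynomial (monomial s 1))
      = coeff t (monomial s 1) := by
  have lower_terms : ∀ m ∈ Finset.range (s i),
      coeff t (monomial (s.erase i + .single i m + .single j (s i - m))
        ((s i).choose m * c ^ (s i - m))) = 0 := by
    intro m hm
    rw [coeff_monomial, if_neg]
    rintro rfl
    have exponent_i : (s.erase i + .single i m + .single j (s i - m)) i = m := by simp [hij]
    exact (exponent_i ▸ hst).not_gt (Finset.mem_range.1 hm)
  rw [bind₁_toMvPolynomial_transvection_monomial, coeff_sum, Finset.sum_range_succ,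
    Finset.sum_eq_zero lower_terms]
  simp [Finsupp.erase_add_single]

lemma det_symPower_diagonal (d : ℕ) (a : σ → R) :
    LinearMap.det (symPower d (Matrix.diagonal a))
      = (Matrix.diagonal a).det ^ (Fintype.card σ + d - 1).choose (Fintype.card σ) := by
  rw [← LinearMap.det_toMatrix (homogeneousBasis σ R d), toMatrix_symPower_diagonal,
    Matrix.det_diagonal, Matrix.det_diagonal, Finset.prod_comm, ← Finset.prod_pow]
  refine Finset.prod_congr rfl fun l _ => ?_
  rw [Finset.prod_pow_eq_pow_sum,
    Finset.sum_coe_sort (Finset.univ.finsuppAntidiag d) fun s : σ →₀ ℕ => s l,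
    sum_finsuppAntidiag_apply]

lemma det_symPower_transvection (d : ℕ) {i j : σ} (hij : i ≠ j) (c : R) :
    LinearMap.det (symPower d (Matrix.transvection i j c)) = 1 := by
  rw [← LinearMap.det_toMatrix (homogeneousBasis σ R d)]
  refine det_eq_one_of_blockUnitriangular (fun s => s.1 i) fun t s hst => ?_
  rw [toMatrix_symPower_apply, coeff_bind₁_toMvPolynomial_transvection_monomial hij c hst,
    coeff_monomial, Matrix.one_apply]
  simp only [Subtype.ext_iff, eq_comm]

lemma det_symPower_of_field {K : Type*} [Field K] (d : ℕ) (A : Matrix σ σ K) :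
    LinearMap.det (symPower d A)
      = A.det ^ (Fintype.card σ + d - 1).choose (Fintype.card σ) := by
  induction A using Matrix.diagonal_transvection_induction with
  | hdiag a _ => exact det_symPower_diagonal d a
  | htransvec t =>
    rw [Matrix.TransvectionStruct.det, one_pow]
    exact det_symPower_transvection d t.hij t.c
  | hmul A B hA hB =>
    rw [symPower_mul, LinearMap.det_comp, hA, hB, Matrix.det_mul, mul_pow, mul_comm]

lemma det_symPower (d : ℕ) (A : Matrix σ σ R) :
    LinearMap.det (symPower d A)
      = A.det ^ (Fintype.card σ + d - 1).choose (Fintype.card σ) := by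
  let G := Matrix.mvPolynomialX σ σ ℤ
  have generic : LinearMap.det (symPower d G)
      = G.det ^ (Fintype.card σ + d - 1).choose (Fintype.card σ) := by
    apply IsFractionRing.injective _ (FractionRing (MvPolynomial (σ × σ) ℤ))
    rw [← det_symPower_map, det_symPower_of_field, map_pow, RingHom.map_det,
      RingHom.mapMatrix_apply]
  let ev : MvPolynomial (σ × σ) ℤ →+* R := eval₂Hom (Int.castRingHom R) fun p => A p.1 p.2
  have map_G : G.map ev = A := Matrix.mvPolynomialX_map_eval₂ _ A
  rw [← map_G, det_symPower_map, generic, map_pow, RingHom.map_det, RingHom.mapMatrix_apply]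

theorem det_symmetricPower_general (d : ℕ) (A : Matrix σ σ R)
    (hpres : ∀ p ∈ homogeneousSubmodule σ R d,
      (aeval fun i => ∑ j, A i j • (X j : MvPolynomial σ R)) p ∈ homogeneousSubmodule σ R d) :
    LinearMap.det
      ((aeval fun i => ∑ j, A i j • (X j : MvPolynomial σ R)).toLinearMap.restrict hpres)
      = A.det ^ (Fintype.card σ + d - 1).choose (Fintype.card σ) := by
  rw [← det_symPower]
  have restrict_eq_symPower :
      (aeval fun i => ∑ j, A i j • (X j : MvPolynomial σ R)).toLinearMap.restrict hpres
        = symPower d A := by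
    ext p : 2
    change aeval _ p.1 = aeval A.toMvPolynomial p.1
    rw [funext (toMvPolynomial_eq_sum_smul_X A)]
  rw [restrict_eq_symPower]

end Det

/-- For an `n×n` matrix `A` over a field `k`, the determinant of the induced linear map
on the `d`-th symmetric power `Sym^d(k^n)` — realized as the space of homogeneous
polynomials of degree `d` in `n` variables, on which `A` acts by the linear substitution
`X i ↦ ∑ j, A i j • X j` — equals `det(A) ^ m` where `m = (n + d - 1).choose n`. -/
theorem det_symmetricPower {k : Type*} [Field k] (n d : ℕ) (A : Matrix (Fin n) (Fin n) k)
    (hpres : ∀ p ∈ homogeneousSubmodule (Fin n) k d,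
      (aeval fun i => ∑ j, A i j • (X j : MvPolynomial (Fin n) k)) p
        ∈ homogeneousSubmodule (Fin n) k d) :
    LinearMap.det
      ((aeval fun i => ∑ j, A i j • (X j : MvPolynomial (Fin n) k)).toLinearMap.restrict hpres)
      = A.det ^ Nat.choose (n + d - 1) n := by
  simpa only [Fintype.card_fin] using det_symmetricPower_general d A hpres
end

section
/- Let L ∈ D = C(x)[τ] have order n and L^(p) (the p-th section operator, ψ_p⁻¹ of the minimal operator of 1 in (D/DL) restricted to D_p = C(x)[τ^p]) also have order n. If D/DL ≅ D/DL̃ for some L̃ ∈ D_p, then (D/DL) viewed as a D_p-module decomposes as a direct sum ⊕_{i=0}^{p-1} M_i, where M_i is the C(x)-span of {τ^j : j ≡ i mod p, 0 ≤ j < n} inside D/DL̃, and each M_i is a D_p-submodule isomorphic to D_p/D_p·L̃_i where L̃_i = τ^i L̃ τ^{-i}. -/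
set_option maxHeartbeats 2000000
set_option synthInstance.maxHeartbeats 1000000

/-- `ℂ(x)`, the field of rational functions. -/
noncomputable abbrev F := RatFunc ℂ

/-- Left multiplication by a rational function, as a `ℂ`-linear endomorphism of `ℂ(x)`. -/
noncomputable def mulL (f : F) : Module.End ℂ F := Algebra.lmul ℂ F f

/-- The shift `τ : f(x) ↦ f(x+1)` as a `ℂ`-linear endomorphism of `ℂ(x)`. -/
noncomputable def shiftE (σ : F ≃ₐ[ℂ] F) : Module.End ℂ F := σ.toLinearMap

/-- The inverse shift `τ⁻¹ : f(x) ↦ f(x-1)`. -/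
noncomputable def shiftInvE (σ : F ≃ₐ[ℂ] F) : Module.End ℂ F := σ.symm.toLinearMap

/-- `σ` is the shift automorphism `f(x) ↦ f(x+1)` of `ℂ(x)`. -/
def IsShiftA (σ : F ≃ₐ[ℂ] F) : Prop :=
  ∀ q : Polynomial ℂ, σ (algebraMap (Polynomial ℂ) F q)
    = algebraMap (Polynomial ℂ) F (q.comp (Polynomial.X + 1))

/-- `sc` is the rescaling homomorphism `f(x) ↦ f(x/p)` of `ℂ(x)`. -/
def IsScale (p : ℕ) (sc : F →+* F) : Prop :=
  ∀ q : Polynomial ℂ, sc (algebraMap (Polynomial ℂ) F q)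
    = algebraMap (Polynomial ℂ) F (q.comp (Polynomial.C ((p : ℂ)⁻¹) * Polynomial.X))

/-- Generators of `D_p = ℂ(x)[τᵖ]`. -/
noncomputable def Dgen (σ : F ≃ₐ[ℂ] F) (p : ℕ) : Set (Module.End ℂ F) :=
  Set.range mulL ∪ {shiftE σ ^ p}

/-- The ring `D_p = ℂ(x)[τᵖ]`, realized as a subring of the `ℂ`-linear endomorphisms of
`ℂ(x)`; `D = Dop σ 1`. -/
noncomputable def Dop (σ : F ≃ₐ[ℂ] F) (p : ℕ) : Subring (Module.End ℂ F) :=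
  Subring.closure (Dgen σ p)

lemma Dop_le (σ : F ≃ₐ[ℂ] F) (p : ℕ) : Dop σ p ≤ Dop σ 1 := by
  apply Subring.closure_le.2
  rintro x (hx | rfl)
  · exact Subring.subset_closure (Or.inl hx)
  · refine pow_mem ?_ p
    have h : shiftE σ ^ 1 ∈ Dop σ 1 := Subring.subset_closure (Or.inr rfl)
    simpa using h

lemma shiftE_mem (σ : F ≃ₐ[ℂ] F) : shiftE σ ∈ Dop σ 1 := by
  have h : shiftE σ ^ 1 ∈ Dop σ 1 := Subring.subset_closure (Or.inr rfl)
  simpa using h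

/-- `ℂ(x) ↪ D`, rational functions as multiplication operators. -/
noncomputable def iota (σ : F ≃ₐ[ℂ] F) : F →+* Dop σ 1 where
  toFun f := ⟨mulL f, Subring.subset_closure (Or.inl ⟨f, rfl⟩)⟩
  map_one' := Subtype.ext (by simp [mulL, map_one])
  map_mul' f g := Subtype.ext (by simp [mulL, map_mul])
  map_zero' := Subtype.ext (by simp [mulL, map_zero])
  map_add' f g := Subtype.ext (by simp [mulL, map_add])

/-- `L` is the operator `∑ᵢ aᵢ τⁱ` (with `i ≤ m`). -/
noncomputable def HasRep (σ : F ≃ₐ[ℂ] F) (L : Module.End ℂ F) (m : ℕ)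
    (a : Fin (m + 1) → F) : Prop :=
  L = ∑ i : Fin (m + 1), mulL (a i) * shiftE σ ^ (i : ℕ)

/-- The cyclic left `D`-module `D/DL`. -/
noncomputable abbrev QuotD (σ : F ≃ₐ[ℂ] F) (L : Dop σ 1) :=
  (Dop σ 1) ⧸ Submodule.span (Dop σ 1) {L}

/-!
The ring `D = ℂ(x)[τ]` is graded by the exponent of `τ` modulo `p`, with degree `0` part `D_p`.
Since `L̃ ∈ D_p` is homogeneous of degree `0`, so is the left ideal `D L̃`, and `D/DL̃` is the
direct sum of the images of the graded pieces, each of them stable under `D_p`. Division by `L̃`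
shows that `1, τ, …, τ^(n-1)` span `D/DL̃`; the spans `M_i` therefore exhaust `D/DL̃`, and being
contained in the independent images of the pieces `D_p τ^i` they coincide with them. Finally
`d ↦ d τ^i` maps `D_p` onto `M_i`, and by `τ^i L̃ = L̃_i τ^i` its kernel is `D_p L̃_i`.
-/

section GradedQuotient

variable {ι K A Q : Type*} [AddMonoid ι] [DecidableEq ι] [Ring K] [Ring A] [Module K A]
  {𝒜 : ι → Submodule K A} [GradedRing 𝒜]
  [AddCommGroup Q] [Module A Q]

open DirectSum

lemma exists_mem_mul_eq_of_mem_span_singleton {ℓ a : A} {i : ι} (hℓ : ℓ ∈ 𝒜 0) (ha : a ∈ 𝒜 i)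
    (h : a ∈ Submodule.span A {ℓ}) : ∃ e ∈ 𝒜 i, e * ℓ = a := by
  obtain ⟨e, rfl⟩ := Submodule.mem_span_singleton.1 h
  refine ⟨decompose 𝒜 e i, SetLike.coe_mem _, ?_⟩
  rw [← coe_decompose_mul_of_right_mem_zero 𝒜 hℓ]
  exact decompose_of_mem_same 𝒜 ha

lemma exists_linearMap_quotient_of_isRightRegular {S : Type*} [Ring S] [Module S Q]
    {j : S →+* A} (hj : Function.Injective j) (hsmul : ∀ (s : S) (x : Q), s • x = j s • x)
    {q : A →ₗ[A] Q} {s s' : S} (hs : j s ∈ 𝒜 0) (hq : LinearMap.ker q = Submodule.span A {j s})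
    {u : A} {i : ι} (hu : IsRightRegular u) (hi : ∀ a, a ∈ 𝒜 i ↔ ∃ d, j d * u = a)
    (hconj : j s' * u = u * j s) :
    ∃ Φ : (S ⧸ Submodule.span S {s'}) →ₗ[S] Q,
      Function.Injective Φ ∧ Set.range Φ = q '' 𝒜 i := by
  let Ψ : S →ₗ[S] Q := LinearMap.toSpanSingleton S Q (q u)
  have hΨ (d : S) : Ψ d = q (j d * u) := by
    rw [LinearMap.toSpanSingleton_apply, hsmul, ← map_smul, smul_eq_mul]
  have hker : LinearMap.ker Ψ = Submodule.span S {s'} := by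
    ext d
    rw [LinearMap.mem_ker, hΨ, ← LinearMap.mem_ker, hq, Submodule.mem_span_singleton (y := s')]
    constructor
    · -- `j d * u = e * j s` with `e` again of degree `i`, so that `u` can be cancelled.
      intro hd
      obtain ⟨e, he, hed⟩ := exists_mem_mul_eq_of_mem_span_singleton hs ((hi _).2 ⟨d, rfl⟩) hd
      obtain ⟨b, rfl⟩ := (hi e).1 he
      refine ⟨b, hj (hu ?_)⟩
      change j (b * s') * u = j d * u
      rw [map_mul, mul_assoc, hconj, ← mul_assoc, hed]
    · rintro ⟨b, rfl⟩
      refine Submodule.mem_span_singleton.2 ⟨j b * u, ?_⟩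
      rw [smul_eq_mul, smul_eq_mul, map_mul, mul_assoc, mul_assoc, hconj]
  rw [← hker]
  refine ⟨(LinearMap.ker Ψ).liftQ Ψ le_rfl, ?_, ?_⟩
  · exact LinearMap.ker_eq_bot.1 (Submodule.ker_liftQ_eq_bot' _ _ rfl)
  · rw [← LinearMap.coe_range, Submodule.range_liftQ, LinearMap.coe_range]
    ext x
    simp only [Set.mem_range, Set.mem_image, SetLike.mem_coe, hi, hΨ, exists_exists_eq_and]

variable [Module K Q] [IsScalarTower K A Q]

lemma iSupIndep_map_of_isHomogeneous_ker {q : A →ₗ[A] Q}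
    (hq : Ideal.IsHomogeneous 𝒜 (LinearMap.ker q)) :
    iSupIndep fun i => (𝒜 i).map (q.restrictScalars K) := by
  rw [iSupIndep_iff_finsetSum_eq_zero_imp_eq_zero]
  intro s v hv hsum i hi
  choose! a ha hav using hv
  have hker : ∑ k ∈ s, a k ∈ LinearMap.ker q := by
    rw [LinearMap.mem_ker, map_sum, ← hsum]
    exact Finset.sum_congr rfl hav
  have hcomponent : (decompose 𝒜 (∑ k ∈ s, a k) i : A) = a i := by
    rw [decompose_sum, DFinsupp.finsetSum_apply, AddSubmonoidClass.coe_finsetSum,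
      Finset.sum_eq_single_of_mem i hi]
    · exact decompose_of_mem_same 𝒜 (ha i hi)
    · exact fun k hk hki => decompose_of_mem_ne 𝒜 (ha k hk) hki
  rw [← hav i hi]
  exact LinearMap.mem_ker.1 (hcomponent ▸ hq i hker)

lemma smul_mem_map_of_mem_zero {q : A →ₗ[A] Q} {d : A} (hd : d ∈ 𝒜 0) {i : ι} {x : Q}
    (hx : x ∈ (𝒜 i).map (q.restrictScalars K)) : d • x ∈ (𝒜 i).map (q.restrictScalars K) := by
  obtain ⟨a, ha, rfl⟩ := hx
  refine ⟨d * a, ?_, map_smul q d a⟩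
  exact zero_add i ▸ SetLike.mul_mem_graded hd ha

end GradedQuotient

section ResidueSpan

variable {K Q : Type*} [Semiring K] [AddCommMonoid Q] [Module K Q]

variable (K) in
/-- The span of the members of a finite family whose index is congruent to `i` modulo `p`; for the
classes of `τ^k`, `k < n`, in `D/DL̃` this is the module `M_i` of the decomposition. -/
def residueSpan {n : ℕ} (v : Fin n → Q) (p i : ℕ) : Submodule K Q :=
  Submodule.span K {x | ∃ k : Fin n, (k : ℕ) % p = i ∧ x = v k}

lemma iSup_residueSpan {n : ℕ} (v : Fin n → Q) {p : ℕ} (hp : 0 < p) :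
    ⨆ i : Fin p, residueSpan K v p i = Submodule.span K (Set.range v) := by
  simp only [residueSpan]
  rw [← Submodule.span_iUnion]
  congr 1
  ext x
  rw [Set.mem_iUnion]
  constructor
  · rintro ⟨_, k, -, rfl⟩
    exact ⟨k, rfl⟩
  · rintro ⟨k, rfl⟩
    exact ⟨⟨(k : ℕ) % p, Nat.mod_lt _ hp⟩, k, rfl, rfl⟩

end ResidueSpan

section OreExtension

variable {K A Q : Type*} [Ring K] [Ring A] [Module K A]

/-- `A` is the skew polynomial ring (Ore extension) `K[t; θ]`: the powers of `t` form a basis of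
the left `K`-module `A`, and `t f = θ(f) t` for `f ∈ K`. The commutation rule is stated through
the scalar action, so that `K` need not be embedded in `A`. -/
structure IsOreExtension (θ : K →+* K) (t : A) : Prop where
  gen_mul_smul : ∀ (f : K) (a : A), t * (f • a) = θ f • (t * a)
  linearIndependent : LinearIndependent K fun k : ℕ => t ^ k
  span_eq_top : Submodule.span K (Set.range fun k : ℕ => t ^ k) = ⊤

variable (K) in
/-- The degree `i` piece of the `ZMod p`-grading of a skew polynomial ring in `t`: the `K`-span of
the powers `t ^ k` with `k ≡ i` modulo `p`. -/
def residuePart (t : A) (p : ℕ) (i : ZMod p) : Submodule K A :=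
  Submodule.span K ((t ^ ·) '' {k : ℕ | (k : ZMod p) = i})

lemma pow_mem_residuePart (t : A) (p k : ℕ) : t ^ k ∈ residuePart K t p k :=
  Submodule.subset_span ⟨k, rfl, rfl⟩

lemma map_residuePart {B : Type*} [Ring B] [Module K B] {f : A →ₗ[K] B} {t : A} {u : B}
    (hf : ∀ k : ℕ, f (t ^ k) = u ^ k) (p : ℕ) (i : ZMod p) :
    (residuePart K t p i).map f = residuePart K u p i := by
  rw [residuePart, residuePart, Submodule.map_span, Set.image_image]
  simp only [hf]

lemma iSup_residuePart (t : A) (p : ℕ) :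
    ⨆ i, residuePart K t p i = Submodule.span K (Set.range fun k : ℕ => t ^ k) := by
  simp only [residuePart, ← Submodule.span_iUnion, ← Set.image_iUnion]
  congr 1
  rw [Set.iUnion_eq_univ_iff.2 fun k : ℕ => ⟨(k : ZMod p), rfl⟩, Set.image_univ]

lemma iSupIndep_residuePart {t : A} (ht : LinearIndependent K fun k : ℕ => t ^ k) (p : ℕ) :
    iSupIndep (residuePart K t p) := by
  intro i
  simp only [residuePart, ← Submodule.span_iUnion, ← Set.image_iUnion]
  refine ht.disjoint_span_image (Set.disjoint_left.2 fun k hk hk' => ?_)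
  obtain ⟨j, hj, hkj⟩ := Set.mem_iUnion₂.1 hk'
  exact hj (hkj.symm.trans hk)

variable {θ : K →+* K} {t : A}

lemma gen_pow_mul_smul (ht : ∀ (f : K) (a : A), t * (f • a) = θ f • (t * a))
    (k : ℕ) (f : K) (a : A) :
    t ^ k * (f • a) = θ^[k] f • (t ^ k * a) := by
  induction k generalizing f a with
  | zero => simp
  | succ k ih => rw [pow_succ, mul_assoc, ht, ih, mul_assoc, Function.iterate_succ_apply]

section Quotient

variable [AddCommGroup Q] [Module A Q] [Module K Q] [IsScalarTower K A Q]

namespace IsOreExtension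

lemma gen_smul_smul (h : IsOreExtension θ t) (f : K) (x : Q) : t • f • x = θ f • t • x := by
  calc t • f • x = (t * f • (1 : A)) • x := by rw [mul_smul, smul_assoc, one_smul]
    _ = θ f • t • x := by rw [h.gen_mul_smul, mul_one, smul_assoc]

lemma span_pow_eq_top (h : IsOreExtension θ t) {n : ℕ} {c : Fin (n + 1) → K}
    (hlead : IsUnit (c (Fin.last n)))
    {q : A →ₗ[A] Q} (hq : Function.Surjective q) (hker : q (∑ j, c j • t ^ (j : ℕ)) = 0) :
    Submodule.span K (Set.range fun j : Fin n => q (t ^ (j : ℕ))) = ⊤ := by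
  set W := Submodule.span K (Set.range fun j : Fin n => q (t ^ (j : ℕ)))
  have hlow {k : ℕ} (hk : k < n) : q (t ^ k) ∈ W := Submodule.subset_span ⟨⟨k, hk⟩, rfl⟩
  have htop : q (t ^ n) ∈ W := by
    rw [← Submodule.smul_mem_iff_of_isUnit W hlead]
    have hsum : (∑ j : Fin n, c j.castSucc • q (t ^ (j : ℕ))) + c (Fin.last n) • q (t ^ n) = 0 := by
      rw [← hker, Fin.sum_univ_castSucc, map_add, map_sum]
      simp only [LinearMap.map_smul_of_tower, Fin.val_castSucc, Fin.val_last]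
    rw [eq_neg_of_add_eq_zero_right hsum]
    exact neg_mem (sum_mem fun j _ => W.smul_mem _ (hlow j.2))
  have hle {k : ℕ} (hk : k ≤ n) : q (t ^ k) ∈ W := hk.lt_or_eq.elim hlow fun e => e ▸ htop
  have hstable {x : Q} (hx : x ∈ W) : t • x ∈ W := by
    induction hx using Submodule.span_induction with
    | mem x hx =>
      obtain ⟨j, rfl⟩ := hx
      rw [← map_smul, smul_eq_mul, ← pow_succ']
      exact hle j.2
    | zero => rw [smul_zero]; exact zero_mem W
    | add x y _ _ hx hy => rw [smul_add]; exact add_mem hx hy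
    | smul f x _ hx => rw [h.gen_smul_smul]; exact W.smul_mem _ hx
  have hpow (k : ℕ) : q (t ^ k) ∈ W := by
    induction k with
    | zero => exact hle n.zero_le
    | succ k ih => rw [pow_succ', ← smul_eq_mul, map_smul]; exact hstable ih
  have hrange : LinearMap.range (q.restrictScalars K) = ⊤ := LinearMap.range_eq_top.2 hq
  rw [eq_top_iff, ← hrange, LinearMap.range_eq_map, ← h.span_eq_top, Submodule.map_span_le]
  rintro _ ⟨k, rfl⟩
  exact hpow k

end IsOreExtension

lemma residueSpan_le_map_residuePart (t : A) (p n : ℕ) (q : A →ₗ[A] Q) (i : ℕ) :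
    residueSpan K (fun k : Fin n => q (t ^ (k : ℕ))) p i ≤
      (residuePart K t p i).map (q.restrictScalars K) := by
  rw [residueSpan, Submodule.span_le]
  rintro _ ⟨k, rfl, rfl⟩
  rw [ZMod.natCast_mod]
  exact Submodule.mem_map_of_mem (pow_mem_residuePart t p k)

end Quotient

variable [IsScalarTower K A A]

lemma residuePart_gradedMonoid (ht : ∀ (f : K) (a : A), t * (f • a) = θ f • (t * a)) (p : ℕ) :
    SetLike.GradedMonoid (residuePart K t p) where
  one_mem := by simpa using pow_mem_residuePart (K := K) t p 0
  mul_mem i j a b ha hb := by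
    induction ha using Submodule.span_induction with
    | mem a ha =>
      obtain ⟨k, rfl, rfl⟩ := ha
      induction hb using Submodule.span_induction with
      | mem b hb =>
        obtain ⟨m, rfl, rfl⟩ := hb
        rw [← pow_add, ← Nat.cast_add]
        exact pow_mem_residuePart t p (k + m)
      | zero => rw [mul_zero]; exact zero_mem _
      | add b c _ _ hb hc => rw [mul_add]; exact add_mem hb hc
      | smul f b _ hb => rw [gen_pow_mul_smul ht]; exact Submodule.smul_mem _ _ hb
    | zero => rw [zero_mul]; exact zero_mem _
    | add a c _ _ ha hc => rw [add_mul]; exact add_mem ha hc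
    | smul f a _ ha => rw [smul_mul_assoc]; exact Submodule.smul_mem _ _ ha

lemma mem_residuePart_iff_exists_mul_pow (p : ℕ) {i : ℕ} (hi : i < p) (a : A) :
    a ∈ residuePart K t p i ↔ ∃ d ∈ residuePart K t p 0, d * t ^ i = a := by
  have hmap : residuePart K t p i =
      (residuePart K t p 0).map (LinearMap.mulRight K (t ^ i)) := by
    rw [residuePart, residuePart, Submodule.map_span, ← Set.image_comp]
    congr 1
    ext b
    constructor
    · rintro ⟨k, hk, rfl⟩
      have hik : i ≤ k := by
        rw [← Nat.mod_eq_of_lt hi, ← (ZMod.natCast_eq_natCast_iff' k i p).1 hk]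
        exact Nat.mod_le k p
      refine ⟨k - i, ?_, ?_⟩
      · rw [Set.mem_ofPred_eq, Nat.cast_sub hik, Set.mem_ofPred.1 hk, sub_self]
      · change t ^ (k - i) * t ^ i = t ^ k
        rw [← pow_add, Nat.sub_add_cancel hik]
    · rintro ⟨k, hk, rfl⟩
      refine ⟨k + i, ?_, pow_add t k i⟩
      rw [Set.mem_ofPred_eq, Nat.cast_add, Set.mem_ofPred.1 hk, zero_add]
  rw [hmap, Submodule.mem_map]
  rfl

namespace IsOreExtension

/-- The `ZMod p`-grading of a skew polynomial ring by the exponent of `t` modulo `p`. -/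
@[reducible] noncomputable def gradedRing (h : IsOreExtension θ t) (p : ℕ) :
    GradedRing (residuePart K t p) where
  toGradedMonoid := residuePart_gradedMonoid h.gen_mul_smul p
  toDecomposition := DirectSum.IsInternal.chooseDecomposition _ <|
    DirectSum.isInternal_submodule_of_iSupIndep_of_iSup_eq_top
      (iSupIndep_residuePart h.linearIndependent p) ((iSup_residuePart t p).trans h.span_eq_top)

lemma isRightRegular_pow (h : IsOreExtension θ t) (i : ℕ) : IsRightRegular (t ^ i) := by
  have hsurj : Function.Surjective (Finsupp.linearCombination K fun k : ℕ => t ^ k) := by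
    rw [← LinearMap.range_eq_top, Finsupp.range_linearCombination, h.span_eq_top]
  have hinj : Function.Injective (Finsupp.linearCombination K fun k : ℕ => t ^ (k + i)) :=
    h.linearIndependent.comp (· + i) (add_left_injective i)
  have hcomp : LinearMap.mulRight K (t ^ i) ∘ₗ Finsupp.linearCombination K (fun k : ℕ => t ^ k) =
      Finsupp.linearCombination K fun k : ℕ => t ^ (k + i) := by
    ext k
    simp [pow_add]
  rw [← hcomp] at hinj
  exact Function.Injective.of_comp_right hinj hsurj

variable [AddCommGroup Q] [Module A Q] [Module K Q] [IsScalarTower K A Q]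

lemma iSupIndep_map_residuePart (h : IsOreExtension θ t) {p : ℕ} {ℓ : A}
    (hℓ : ℓ ∈ residuePart K t p 0) {q : A →ₗ[A] Q}
    (hker : LinearMap.ker q = Submodule.span A {ℓ}) :
    iSupIndep fun i : Fin p => (residuePart K t p (i : ℕ)).map (q.restrictScalars K) := by
  let := h.gradedRing p
  have hinj : Function.Injective fun i : Fin p => ((i : ℕ) : ZMod p) := by
    intro i k hik
    have hmod := (ZMod.natCast_eq_natCast_iff' i k p).1 hik
    rwa [Nat.mod_eq_of_lt i.2, Nat.mod_eq_of_lt k.2, ← Fin.ext_iff] at hmod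
  refine (iSupIndep_map_of_isHomogeneous_ker (hker ▸ Ideal.homogeneous_span _ _ ?_)).comp hinj
  rintro _ rfl
  exact ⟨0, hℓ⟩

lemma residueSpan_eq_map_residuePart (h : IsOreExtension θ t) {n p : ℕ} {ℓ : A}
    (hℓ : ℓ ∈ residuePart K t p 0) {q : A →ₗ[A] Q}
    (hker : LinearMap.ker q = Submodule.span A {ℓ})
    (hsup : ⨆ i : Fin p, residueSpan K (fun k : Fin n => q (t ^ (k : ℕ))) p i = ⊤) (i : Fin p) :
    residueSpan K (fun k : Fin n => q (t ^ (k : ℕ))) p i =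
      (residuePart K t p (i : ℕ)).map (q.restrictScalars K) :=
  congrFun (((h.iSupIndep_map_residuePart hℓ hker).le_iff_eq_of_iSup_eq_top hsup).1 fun i =>
    residueSpan_le_map_residuePart t p n q i) i

end IsOreExtension

end OreExtension

lemma linearIndependent_pow_toLinearMap {k K : Type*} [CommSemiring k] [Field K] [Algebra k K]
    {σ : K ≃ₐ[k] K} (hσ : ¬IsOfFinOrder σ) :
    LinearIndependent K fun m : ℕ => (σ.toLinearMap ^ m : Module.End k K) := by
  have hinj : Function.Injective fun m : ℕ => (σ ^ m).toAlgHom :=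
    AlgEquiv.coe_toAlgHom_injective.comp (injective_pow_iff_not_isOfFinOrder.2 hσ)
  have hpow : (fun m : ℕ => σ.toLinearMap ^ m) = AlgHom.toLinearMap ∘ fun m => (σ ^ m).toAlgHom :=
    funext fun m => (AlgEquiv.pow_toLinearMap σ m).symm
  rw [hpow]
  exact (linearIndependent_toLinearMap k K K).comp _ hinj

section ShiftOperators

lemma mulL_mul (f : F) (A : Module.End ℂ F) : mulL f * A = f • A := rfl

lemma shiftE_mul_smul (σ : F ≃ₐ[ℂ] F) (f : F) (A : Module.End ℂ F) :
    shiftE σ * (f • A) = σ f • (shiftE σ * A) :=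
  LinearMap.ext fun x => map_mul σ f (A x)

lemma mem_Dop_iff_mem_residuePart_zero (σ : F ≃ₐ[ℂ] F) (p : ℕ) (d : Module.End ℂ F) :
    d ∈ Dop σ p ↔ d ∈ residuePart F (shiftE σ) p 0 := by
  have hgraded : SetLike.GradedMonoid (residuePart F (shiftE σ) p) :=
    residuePart_gradedMonoid (θ := (σ : F →+* F)) (shiftE_mul_smul σ) p
  constructor
  · suffices Dop σ p ≤ SetLike.GradeZero.subring (residuePart F (shiftE σ) p) from fun h => this h
    refine Subring.closure_le.2 ?_
    rintro _ (⟨f, rfl⟩ | rfl)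
    · rw [← mul_one (mulL f), mulL_mul]
      exact Submodule.smul_mem _ f hgraded.one_mem
    · change shiftE σ ^ p ∈ residuePart F (shiftE σ) p 0
      simpa only [CharP.cast_eq_zero] using pow_mem_residuePart (K := F) (shiftE σ) p p
  · intro h
    induction h using Submodule.span_induction with
    | mem d hd =>
      obtain ⟨k, hk, rfl⟩ := hd
      obtain ⟨m, rfl⟩ := (ZMod.natCast_eq_zero_iff k p).1 hk
      change shiftE σ ^ (p * m) ∈ Dop σ p
      rw [pow_mul]
      have hshift : shiftE σ ^ p ∈ Dop σ p := Subring.subset_closure (Or.inr rfl)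
      exact pow_mem hshift m
    | zero => exact zero_mem _
    | add d e _ _ hd he => exact add_mem hd he
    | smul f d _ hd =>
      rw [← mulL_mul]
      exact mul_mem (Subring.subset_closure (Or.inl ⟨f, rfl⟩)) hd

/-- The left `ℂ(x)`-vector space structure of `D = ℂ(x)[τ]`. It is only a local instance, since
globally it would induce a second `ℂ(x)`-module structure on the quotients `QuotD σ L`. -/
@[reducible] noncomputable def Dop.moduleF (σ : F ≃ₐ[ℂ] F) : Module F (Dop σ 1) :=
  Module.compHom _ (iota σ)

attribute [local instance] Dop.moduleF

lemma Dop.isScalarTower_of_smul_eq_iota_smul {σ : F ≃ₐ[ℂ] F} {Q : Type*} [AddCommGroup Q]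
    [Module (Dop σ 1) Q] [Module F Q] (h : ∀ (f : F) (x : Q), f • x = iota σ f • x) :
    IsScalarTower F (Dop σ 1) Q :=
  ⟨fun f d x => (mul_smul (iota σ f) d x).trans (h f (d • x)).symm⟩

lemma Dop.isScalarTower (σ : F ≃ₐ[ℂ] F) : IsScalarTower F (Dop σ 1) (Dop σ 1) :=
  Dop.isScalarTower_of_smul_eq_iota_smul fun _ _ => rfl

/-- The shift `τ` as an element of `D = ℂ(x)[τ]`. -/
noncomputable abbrev Dop.tau (σ : F ≃ₐ[ℂ] F) : Dop σ 1 := ⟨shiftE σ, shiftE_mem σ⟩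

/-- The inclusion of `D = ℂ(x)[τ]` into the endomorphisms of `ℂ(x)`, as a `ℂ(x)`-linear map. -/
noncomputable def Dop.subtypeₗ (σ : F ≃ₐ[ℂ] F) : Dop σ 1 →ₗ[F] Module.End ℂ F where
  toFun d := d
  map_add' _ _ := rfl
  map_smul' _ _ := rfl

lemma Dop.mem_residuePart_zero_iff (σ : F ≃ₐ[ℂ] F) (p : ℕ) (d : Dop σ 1) :
    d ∈ residuePart F (Dop.tau σ) p 0 ↔ (d : Module.End ℂ F) ∈ Dop σ p := by
  have hmap := map_residuePart (K := F) (f := Dop.subtypeₗ σ) (t := Dop.tau σ)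
    (u := shiftE σ) (fun _ => rfl) p 0
  rw [mem_Dop_iff_mem_residuePart_zero, ← hmap]
  exact (Function.Injective.mem_set_image Subtype.val_injective).symm

lemma Dop.mem_residuePart_zero_iff_mem_range (σ : F ≃ₐ[ℂ] F) (p : ℕ) (d : Dop σ 1) :
    d ∈ residuePart F (Dop.tau σ) p 0 ↔ d ∈ (Subring.inclusion (Dop_le σ p)).range := by
  rw [Dop.mem_residuePart_zero_iff, RingHom.mem_range]
  constructor
  · exact fun hd => ⟨⟨d, hd⟩, Subtype.ext (Subring.coe_inclusion _ _)⟩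
  · rintro ⟨e, rfl⟩
    rw [Subring.coe_inclusion]
    exact e.2

lemma Dop.mem_residuePart_iff_exists_inclusion_mul_pow (σ : F ≃ₐ[ℂ] F) {p i : ℕ}
    (hi : i < p) (a : Dop σ 1) : a ∈ residuePart F (Dop.tau σ) p i ↔
      ∃ d : Dop σ p, Subring.inclusion (Dop_le σ p) d * Dop.tau σ ^ i = a := by
  have := Dop.isScalarTower σ
  rw [mem_residuePart_iff_exists_mul_pow p hi]
  simp only [Dop.mem_residuePart_zero_iff_mem_range, RingHom.mem_range, exists_exists_eq_and]

lemma HasRep.eq_sum_smul_pow {σ : F ≃ₐ[ℂ] F} {L : Module.End ℂ F} (hL : L ∈ Dop σ 1) {m : ℕ}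
    {a : Fin (m + 1) → F} (h : HasRep σ L m a) :
    (⟨L, hL⟩ : Dop σ 1) = ∑ i, a i • Dop.tau σ ^ (i : ℕ) :=
  Subtype.ext <| by
    change L = Dop.subtypeₗ σ (∑ i, a i • Dop.tau σ ^ (i : ℕ))
    rw [map_sum]
    exact h.trans (Finset.sum_congr rfl fun i _ => rfl)

lemma Dop.isOreExtension {σ : F ≃ₐ[ℂ] F} (hσ : ¬IsOfFinOrder σ) :
    IsOreExtension (σ : F →+* F) (Dop.tau σ) where
  gen_mul_smul f d := Subtype.ext (shiftE_mul_smul σ f d)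
  linearIndependent := LinearIndependent.of_comp (Dop.subtypeₗ σ)
    (linearIndependent_pow_toLinearMap hσ)
  span_eq_top := by
    rw [← iSup_residuePart _ 1, eq_top_iff]
    exact fun d _ => Submodule.mem_iSup_of_mem 0 ((Dop.mem_residuePart_zero_iff σ 1 d).2 d.2)

lemma shiftInvE_pow_mul_shiftE_pow (σ : F ≃ₐ[ℂ] F) (k : ℕ) :
    shiftInvE σ ^ k * shiftE σ ^ k = 1 := by
  change σ⁻¹.toLinearMap ^ k * σ.toLinearMap ^ k = 1
  rw [← AlgEquiv.pow_toLinearMap, ← AlgEquiv.pow_toLinearMap, inv_pow]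
  exact LinearMap.ext fun x => (σ ^ k).symm_apply_apply x

lemma conj_mul_shiftE_pow (σ : F ≃ₐ[ℂ] F) (k : ℕ) (A : Module.End ℂ F) :
    shiftE σ ^ k * A * shiftInvE σ ^ k * shiftE σ ^ k = shiftE σ ^ k * A := by
  rw [mul_assoc _ (shiftInvE σ ^ k), shiftInvE_pow_mul_shiftE_pow, mul_one]

theorem section_restriction_decomposition_general {p n : ℕ} (hp : 0 < p) {σ : F ≃ₐ[ℂ] F}
    (hσ : ¬IsOfFinOrder σ) {Lt : Module.End ℂ F} (hLtp : Lt ∈ Dop σ p) {aLt : Fin (n + 1) → F}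
    (hLtrep : HasRep σ Lt n aLt) (hLtlead : aLt (Fin.last n) ≠ 0)
    (hconj : ∀ i : Fin p, shiftE σ ^ (i : ℕ) * Lt * shiftInvE σ ^ (i : ℕ) ∈ Dop σ p)
    {Q : Type*} [AddCommGroup Q] [Module (Dop σ 1) Q] {q : Dop σ 1 →ₗ[Dop σ 1] Q}
    (hq : Function.Surjective q)
    (hker : LinearMap.ker q = Submodule.span (Dop σ 1) {⟨Lt, Dop_le σ p hLtp⟩})
    [Module F Q] (hinstF : ∀ (f : F) (x : Q), f • x = iota σ f • x)
    [Module (Dop σ p) Q]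
    (hinstDp : ∀ (d : Dop σ p) (x : Q), d • x = Subring.inclusion (Dop_le σ p) d • x)
    {M : Fin p → Submodule F Q}
    (hM : ∀ i, M i = residueSpan F (fun k : Fin n => q (Dop.tau σ ^ (k : ℕ))) p i) :
    (∀ (i : Fin p) (d : Module.End ℂ F) (hd : d ∈ Dop σ p),
      ∀ x ∈ M i, (⟨d, Dop_le σ p hd⟩ : Dop σ 1) • x ∈ M i) ∧
    (⨆ i, M i) = ⊤ ∧ iSupIndep M ∧
    (∀ i : Fin p, ∃ Φ : ((Dop σ p) ⧸ Submodule.span (Dop σ p)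
          {(⟨shiftE σ ^ (i : ℕ) * Lt * shiftInvE σ ^ (i : ℕ), hconj i⟩ : Dop σ p)})
        →ₗ[Dop σ p] Q, Function.Injective Φ ∧ Set.range Φ = M i) := by
  have := Dop.isScalarTower σ
  have := Dop.isScalarTower_of_smul_eq_iota_smul hinstF
  have hOre := Dop.isOreExtension hσ
  let := hOre.gradedRing p
  have hLt := (Dop.mem_residuePart_zero_iff σ p ⟨Lt, Dop_le σ p hLtp⟩).2 hLtp
  have hsup : ⨆ i, M i = ⊤ := by
    rw [iSup_congr hM, iSup_residueSpan _ hp]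
    refine hOre.span_pow_eq_top hLtlead.isUnit hq ?_
    rw [← hLtrep.eq_sum_smul_pow (Dop_le σ p hLtp), ← LinearMap.mem_ker, hker]
    exact Submodule.mem_span_singleton_self _
  obtain rfl : M = fun i => _ := funext fun i =>
    (hM i).trans (hOre.residueSpan_eq_map_residuePart hLt hker (iSup_congr hM ▸ hsup) i)
  refine ⟨fun i d hd x hx => ?_, hsup, hOre.iSupIndep_map_residuePart hLt hker, fun i => ?_⟩
  · exact smul_mem_map_of_mem_zero ((Dop.mem_residuePart_zero_iff σ p _).2 hd) hx
  · exact exists_linearMap_quotient_of_isRightRegular (Subring.inclusion_injective (Dop_le σ p))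
      hinstDp (s := ⟨Lt, hLtp⟩) hLt hker (hOre.isRightRegular_pow i)
      (Dop.mem_residuePart_iff_exists_inclusion_mul_pow σ i.2)
      (Subtype.ext (conj_mul_shiftE_pow σ i Lt))

end ShiftOperators

lemma IsShiftA.not_isOfFinOrder {σ : F ≃ₐ[ℂ] F} (hσ : IsShiftA σ) : ¬IsOfFinOrder σ := by
  have hX : σ RatFunc.X = RatFunc.X + 1 := by
    simpa [RatFunc.algebraMap_X] using hσ Polynomial.X
  have hpow (m : ℕ) : (σ ^ m) RatFunc.X = RatFunc.X + (m : F) := by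
    induction m with
    | zero => simp
    | succ m ih =>
      rw [pow_succ', AlgEquiv.mul_apply, ih, map_add, map_natCast, hX, Nat.cast_succ, add_assoc,
        add_comm 1]
  rw [← injective_pow_iff_not_isOfFinOrder]
  intro m m' h
  have hm := DFunLike.congr_fun h (RatFunc.X : F)
  simp only [hpow] at hm
  exact_mod_cast add_left_cancel hm

/-- **Decomposition of the restriction.** Let `L ∈ D = ℂ(x)[τ]` have order `n` and let the
section operator `L⁽ᵖ⁾` also have order `n`. If `D/DL ≅ D/DL̃` for some `L̃ ∈ D_p`, then
`D/DL̃`, viewed as a `D_p`-module, decomposes as the direct sum of the `ℂ(x)`-spans `Mᵢ`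
of `{τʲ : j ≡ i mod p, 0 ≤ j < n}` (`0 ≤ i < p`), each `Mᵢ` being a `D_p`-submodule
isomorphic to `D_p/D_p·L̃ᵢ` where `L̃ᵢ = τⁱ L̃ τ⁻ⁱ`. -/
theorem section_restriction_decomposition (p n : ℕ) (hp : 0 < p) (hn : 0 < n)
    (σ : F ≃ₐ[ℂ] F) (hσ : IsShiftA σ) (sc : F →+* F) (hsc : IsScale p sc)
    -- the operator `L`, of order `n`:
    (L : Module.End ℂ F) (hL : L ∈ Dop σ 1)
    (aL : Fin (n + 1) → F) (hLrep : HasRep σ L n aL)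
    (hL0 : aL 0 ≠ 0) (hLlead : aL (Fin.last n) ≠ 0)
    -- `ψ_p : D → D_p`, the isomorphism `τ ↦ τᵖ`, `x ↦ x/p`:
    (φ : Dop σ 1 →+* Dop σ p) (hbij : Function.Bijective φ)
    (hφmul : ∀ f : F, (φ (iota σ f) : Module.End ℂ F) = mulL (sc f))
    (hφτ : (φ ⟨shiftE σ, shiftE_mem σ⟩ : Module.End ℂ F) = shiftE σ ^ p)
    -- the section operator `Lp = L⁽ᵖ⁾` has order `n`: `ψ_p(Lp) ∈ D_p ∩ DL` is of minimal
    -- order there: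
    (Lp : Module.End ℂ F) (hLp : Lp ∈ Dop σ 1)
    (hsec : (⟨(φ ⟨Lp, hLp⟩ : Module.End ℂ F), Dop_le σ p (φ ⟨Lp, hLp⟩).2⟩ : Dop σ 1)
        ∈ Submodule.span (Dop σ 1) {(⟨L, hL⟩ : Dop σ 1)})
    (hmin : ∀ M : Dop σ 1, M ∈ Submodule.span (Dop σ 1) {(⟨L, hL⟩ : Dop σ 1)} →
      (M : Module.End ℂ F) ∈ Dop σ p → M ≠ 0 →
      ∀ (m : ℕ) (b : Fin (m + 1) → F), HasRep σ (M : Module.End ℂ F) m b →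
        b (Fin.last m) ≠ 0 → p * n ≤ m)
    (aLp : Fin (n + 1) → F) (hLprep : HasRep σ Lp n aLp) (hLplead : aLp (Fin.last n) ≠ 0)
    -- `L̃ ∈ D_p`, of order `n`, with `D/DL ≅ D/DL̃`:
    (Lt : Module.End ℂ F) (hLtp : Lt ∈ Dop σ p)
    (aLt : Fin (n + 1) → F) (hLtrep : HasRep σ Lt n aLt) (hLtlead : aLt (Fin.last n) ≠ 0)
    (hiso : Nonempty ((QuotD σ ⟨L, hL⟩) ≃ₗ[Dop σ 1] (QuotD σ ⟨Lt, Dop_le σ p hLtp⟩)))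
    -- the conjugates `L̃ᵢ = τⁱ L̃ τ⁻ⁱ` lie in `D_p`:
    (hconj : ∀ i : Fin p, shiftE σ ^ (i : ℕ) * Lt * shiftInvE σ ^ (i : ℕ) ∈ Dop σ p)
    -- the `ℂ(x)`-vector space structure of `D/DL̃` (via multiplication operators):
    [instF : Module F (QuotD σ ⟨Lt, Dop_le σ p hLtp⟩)]
    (hinstF : ∀ (f : F) (x : QuotD σ ⟨Lt, Dop_le σ p hLtp⟩), f • x = iota σ f • x)
    -- the restriction of `D/DL̃` to a `D_p`-module:
    [instDp : Module (Dop σ p) (QuotD σ ⟨Lt, Dop_le σ p hLtp⟩)]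
    (hinstDp : ∀ (d : Dop σ p) (x : QuotD σ ⟨Lt, Dop_le σ p hLtp⟩),
      d • x = Subring.inclusion (Dop_le σ p) d • x)
    -- the `ℂ(x)`-spans `Mᵢ` of the `τʲ` with `j ≡ i mod p`:
    (Mi : Fin p → Submodule F (QuotD σ ⟨Lt, Dop_le σ p hLtp⟩))
    (hMi : ∀ i, Mi i = Submodule.span F
      {x | ∃ j : Fin n, (j : ℕ) % p = (i : ℕ) ∧
        x = Submodule.Quotient.mk (⟨shiftE σ ^ (j : ℕ), pow_mem (shiftE_mem σ) _⟩ :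
          Dop σ 1)}) :
    -- each `Mᵢ` is a `D_p`-submodule:
    (∀ (i : Fin p) (d : Module.End ℂ F) (hd : d ∈ Dop σ p),
      ∀ x ∈ Mi i, (⟨d, Dop_le σ p hd⟩ : Dop σ 1) • x ∈ Mi i) ∧
    -- `D/DL̃` is their direct sum:
    (⨆ i, Mi i) = ⊤ ∧ iSupIndep Mi ∧
    -- and `Mᵢ ≅ D_p/D_p·L̃ᵢ` as `D_p`-modules:
    (∀ i : Fin p, ∃ Φ : ((Dop σ p) ⧸ Submodule.span (Dop σ p)
          {(⟨shiftE σ ^ (i : ℕ) * Lt * shiftInvE σ ^ (i : ℕ), hconj i⟩ : Dop σ p)})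
        →ₗ[Dop σ p] (QuotD σ ⟨Lt, Dop_le σ p hLtp⟩),
      Function.Injective Φ ∧ Set.range Φ = ↑(Mi i)) := by
  exact section_restriction_decomposition_general hp hσ.not_isOfFinOrder hLtp hLtrep hLtlead hconj
    (Submodule.mkQ_surjective _) (Submodule.ker_mkQ _) hinstF hinstDp hMi
end
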